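/- arXiv:2303.02364 — 2 statements merged into one kernel-verified Lean document; each statement's English description precedes it below -/
import Mathlib

section
/- Let G be a group, let F : G → G be a group automorphism, let A ≤ G be a subgroup with F(a) = a for all a ∈ A, and let g ∈ G be such that ẇ := g⁻¹·F(g) lies in C_G(A). Then for any c ∈ C_G(A), the element gcg⁻¹ is fixed by F if and only if ẇ·F(c)·ẇ⁻¹ = c; consequently the map c ↦ gcg⁻¹ defines a group isomorphism from the subgroup {c ∈ C_G(A) : ẇ·F(c)·ẇ⁻¹ = c} of C_G(A) onto the subgroup C_G(gAg⁻¹) ∩ G^F of all F-fixed elements centralizing gAg⁻¹. -/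
/-- Let `F` be an automorphism of `G` fixing a subgroup `A` pointwise,
and `g ∈ G` with `w := g⁻¹ * F g ∈ C_G(A)`.  Then for `c ∈ C_G(A)`, `g c g⁻¹` is
`F`-fixed iff `w F(c) w⁻¹ = c`, and `c ↦ g c g⁻¹` gives an isomorphism from
`{c ∈ C_G(A) : w F(c) w⁻¹ = c}` onto `C_G(gAg⁻¹) ∩ G^F`. -/
theorem centralizer_twisted_fixed_points {G : Type*} [Group G] (F : G ≃* G)
    (A : Subgroup G) (hA : ∀ a ∈ A, F a = a) (g w : G) (hw : w = g⁻¹ * F g)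
    (hwC : w ∈ Subgroup.centralizer (A : Set G)) :
    (∀ c ∈ Subgroup.centralizer (A : Set G),
      (F (g * c * g⁻¹) = g * c * g⁻¹ ↔ w * F c * w⁻¹ = c)) ∧
    ∃ e : ↥(Subgroup.centralizer (A : Set G) ⊓
            MonoidHom.eqLocus ((MulAut.conj w).toMonoidHom.comp F.toMonoidHom)
              (MonoidHom.id G)) ≃*
          ↥(Subgroup.centralizer ((Subgroup.map (MulAut.conj g).toMonoidHom A : Subgroup G) : Set G) ⊓
            MonoidHom.eqLocus F.toMonoidHom (MonoidHom.id G)),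
      ∀ c, (e c : G) = g * (c : G) * g⁻¹ := by
  have key : ∀ c : G, F (g * c * g⁻¹) = g * c * g⁻¹ ↔ w * F c * w⁻¹ = c := by
    intro c
    have h1 : w * F c * w⁻¹ = g⁻¹ * F (g * c * g⁻¹) * g := by
      rw [hw, map_mul, map_mul, map_inv]; group
    rw [h1]
    constructor
    · intro h; rw [h]; group
    · intro h
      calc F (g * c * g⁻¹) = g * (g⁻¹ * F (g * c * g⁻¹) * g) * g⁻¹ := by group
        _ = g * c * g⁻¹ := by rw [h]
  have cent : ∀ c : G, g * c * g⁻¹ ∈ Subgroup.centralizer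
      ((Subgroup.map (MulAut.conj g).toMonoidHom A : Subgroup G) : Set G) ↔
      c ∈ Subgroup.centralizer (A : Set G) := by
    intro c
    rw [Subgroup.mem_centralizer_iff, Subgroup.mem_centralizer_iff]
    constructor
    · intro h a ha
      have h2 : (g * a * g⁻¹) * (g * c * g⁻¹) = (g * c * g⁻¹) * (g * a * g⁻¹) :=
        h (g * a * g⁻¹) ⟨a, ha, rfl⟩
      calc a * c = g⁻¹ * ((g * a * g⁻¹) * (g * c * g⁻¹)) * g := by group
        _ = g⁻¹ * ((g * c * g⁻¹) * (g * a * g⁻¹)) * g := by rw [h2]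
        _ = c * a := by group
    · rintro h _ ⟨a, ha, rfl⟩
      have h2 := h a ha
      change (g * a * g⁻¹) * (g * c * g⁻¹) = (g * c * g⁻¹) * (g * a * g⁻¹)
      calc (g * a * g⁻¹) * (g * c * g⁻¹) = g * (a * c) * g⁻¹ := by group
        _ = g * (c * a) * g⁻¹ := by rw [h2]
        _ = _ := by group
  refine ⟨fun c _ => key c, ?_⟩
  refine ⟨((MulAut.conj g).subgroupMap _).trans (MulEquiv.subgroupCongr ?_), fun c => rfl⟩
  ext x
  constructor
  · rintro ⟨c, ⟨hc, hf⟩, rfl⟩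
    exact ⟨(cent c).2 hc, (key c).2 hf⟩
  · rintro ⟨hx, hf⟩
    have e : g * (g⁻¹ * x * g) * g⁻¹ = x := by group
    refine ⟨g⁻¹ * x * g, ⟨(cent _).1 (by rw [e]; exact hx), (key _).1 (by rw [e]; exact hf)⟩, e⟩
end

section
/- For every integer n ≥ 1 and every odd prime p, the general linear group GL_n(𝔽₂) over the field with two elements contains no elementary abelian p-subgroup of rank n; that is, GL_n(𝔽₂) has no subgroup isomorphic to the direct product of n copies of the cyclic group of order p. -/
theorem exists_regular_vec_aux {n p : ℕ} (hodd : Odd p) {A : Type} [CommGroup A] [Finite A]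
    (hA : ∀ a : A, a ^ p = 1) (g : A →* Matrix (Fin n) (Fin n) (ZMod 2))
    (hg : Function.Injective g) :
    ∃ v : Fin n → ZMod 2, ∀ a : A, (g a).mulVec v = v → a = 1 := by
  classical
  obtain ⟨v, hv⟩ := Finite.exists_min
    (fun v : Fin n → ZMod 2 => {a : A | (g a).mulVec v = v}.ncard)
  refine ⟨v, fun b hb => ?_⟩
  by_contra hne
  have hgb : g b ≠ 1 := fun h => hne (hg (by rw [h, map_one]))
  obtain ⟨u, hu⟩ : ∃ u, (g b).mulVec u ≠ u := by
    by_contra! h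
    exact hgb (Matrix.mulVec_injective (by ext1 u; simp [h u]))
  have hp1 : (p : ZMod 2) = 1 := (ZMod.natCast_eq_one_iff_odd).2 hodd
  have hpM : (p : Matrix (Fin n) (Fin n) (ZMod 2)) = 1 := by
    have := congrArg (algebraMap (ZMod 2) (Matrix (Fin n) (Fin n) (ZMod 2))) hp1
    simpa using this
  set N : Matrix (Fin n) (Fin n) (ZMod 2) := ∑ i ∈ Finset.range p, g b ^ i with hN
  have hbp : g b ^ p = 1 := by rw [← map_pow, hA, map_one]
  have hbN : g b * N = N := by
    have := mul_geom_sum (g b) p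
    rw [hbp, sub_self, sub_mul, one_mul] at this
    exact sub_eq_zero.1 this
  have hpowN : ∀ i : ℕ, g b ^ i * N = N := by
    intro i
    induction i with
    | zero => simp
    | succ k ih => rw [pow_succ, mul_assoc, hbN, ih]
  have hNN : N * N = N := by
    conv_lhs => rw [hN]
    rw [Finset.sum_mul, ← hN, Finset.sum_congr rfl (fun i _ => hpowN i)]
    rw [Finset.sum_const, Finset.card_range, nsmul_eq_mul, hpM, one_mul]
  have hcomm : ∀ a, N * g a = g a * N := by
    intro a
    have h1 : Commute (g a) (g b) := (Commute.all a b).map g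
    exact (Commute.sum_right _ _ _ (fun i _ => h1.pow_right i)).eq.symm
  have hpowv : ∀ i : ℕ, (g b ^ i).mulVec v = v := by
    intro i
    induction i with
    | zero => simp
    | succ k ih => rw [pow_succ, ← Matrix.mulVec_mulVec, hb, ih]
  have hNv : N.mulVec v = v := by
    rw [hN, Matrix.sum_mulVec, Finset.sum_congr rfl (fun i _ => hpowv i), Finset.sum_const,
      Finset.card_range, ← Nat.cast_smul_eq_nsmul (ZMod 2), hp1, one_smul]
  set w := u - N.mulVec u with hw
  have hNw : N.mulVec w = 0 := by
    rw [hw, Matrix.mulVec_sub, Matrix.mulVec_mulVec, hNN, sub_self]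
  have hbw : (g b).mulVec w ≠ w := by
    rw [hw, Matrix.mulVec_sub, Matrix.mulVec_mulVec, hbN]
    intro h
    exact hu (sub_left_injective h)
  have key : ∀ a, (g a).mulVec (v + w) = v + w → (g a).mulVec v = v ∧ (g a).mulVec w = w := by
    intro a ha
    have h1 := congrArg N.mulVec ha
    rw [Matrix.mulVec_mulVec, hcomm, ← Matrix.mulVec_mulVec, Matrix.mulVec_add, hNv, hNw,
      add_zero] at h1
    refine ⟨h1, ?_⟩
    rw [Matrix.mulVec_add, h1] at ha
    exact add_left_cancel ha
  refine absurd (hv (v + w)) (not_le.2 (Set.ncard_lt_ncard ?_ (Set.toFinite _)))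
  refine ⟨fun a ha => (key a ha).1, fun h => hbw (key b (h hb)).2⟩

/-- For every `n ≥ 1` and every odd prime `p`, the group
`GL_n(𝔽₂)` contains no elementary abelian `p`-subgroup of rank `n`, i.e. no subgroup
isomorphic to the direct product of `n` copies of the cyclic group of order `p`. -/
theorem no_rank_n_elementary_abelian_in_GLn_F2 (n : ℕ) (hn : 1 ≤ n)
    (p : ℕ) (hp : p.Prime) (hodd : Odd p) :
    ¬ ∃ H : Subgroup (Matrix.GeneralLinearGroup (Fin n) (ZMod 2)),
        Nonempty (H ≃* (Fin n → Multiplicative (ZMod p))) := by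
  rintro ⟨H, ⟨e⟩⟩
  haveI : NeZero p := ⟨hp.ne_zero⟩
  haveI : Finite (Multiplicative (ZMod p)) := inferInstanceAs (Finite (ZMod p))
  let g : (Fin n → Multiplicative (ZMod p)) →* Matrix (Fin n) (Fin n) (ZMod 2) :=
    (Units.coeHom _).comp (H.subtype.comp e.symm.toMonoidHom)
  have hg : Function.Injective g := by
    intro a b h
    exact e.symm.injective (Subtype.ext (Units.ext h))
  have hA : ∀ a : Fin n → Multiplicative (ZMod p), a ^ p = 1 := by
    intro a
    ext i
    apply Multiplicative.toAdd.injective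
    simp
  obtain ⟨v, hv⟩ := exists_regular_vec_aux hodd hA g hg
  have hinj : Function.Injective (fun a => (g a).mulVec v) := by
    intro a b h
    have h2 : (g (b⁻¹ * a)).mulVec v = v := by
      have h3 := congrArg (g b⁻¹).mulVec h
      simp only [Matrix.mulVec_mulVec, ← map_mul] at h3
      rw [h3]
      simp
    exact (inv_mul_eq_one.1 (hv _ h2)).symm
  have hc := Nat.card_le_card_of_injective _ hinj
  have h1 : Nat.card (Multiplicative (ZMod p)) = p := Nat.card_zmod p
  rw [Nat.card_fun, Nat.card_fun, h1, Nat.card_zmod, Nat.card_fin] at hc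
  have hlt : 2 < p := by
    rcases hp.two_le.lt_or_eq with h | h
    · exact h
    · subst h; exact absurd hodd (by decide)
  exact absurd hc (not_le.2 (Nat.pow_lt_pow_left hlt (by omega)))
end
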